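/- Let F be a free group and R, S, T normal subgroups of F with R ⊆ S and R ⊆ T, and let 𝐫, 𝐬, 𝐭 be the two-sided ideals of ℤ[F] generated by the augmentation ideals of R, S, T. If a ∈ D(F, 𝐬𝐫𝐬 + 𝐭𝐫𝐭), then a² ∈ D(F, 𝐫𝐫𝐬 + 𝐬𝐫𝐫 + 𝐫𝐫𝐭 + 𝐭𝐫𝐫) and a⁴ ∈ [R, R, ST], where [R,R,ST] = [[R,R],ST] and ST is the subgroup generated by S and T. -/

import Mathlib

/-! Group-ring preliminaries: for a subgroup `N` of `F`, `aug N` is the additive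
subgroup `Δ(N)` of `ℤ[F]` generated by `{n - 1 : n ∈ N}`, and `augI N = Δ(N)ℤ[F]`
is the corresponding (for normal `N` two-sided) ideal of `ℤ[F]`.  Products of
submodules are additive spans of products, as in the paper. -/

/-- the augmentation ideal `Δ(N)` of a subgroup `N ≤ F`, inside `ℤ[F]` -/
noncomputable def aug {F : Type} [Group F] (N : Subgroup F) :
    Submodule ℤ (MonoidAlgebra ℤ F) :=
  Submodule.span ℤ {x | ∃ n ∈ N, x = (MonoidAlgebra.of ℤ F n) - 1}

/-- the ideal `𝐧 = Δ(N)ℤ[F]` of `ℤ[F]` -/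
noncomputable def augI {F : Type} [Group F] (N : Subgroup F) :
    Submodule ℤ (MonoidAlgebra ℤ F) :=
  aug N * ⊤


section Rec
variable {F : Type*} [Group F] [IsFreeGroup F] {A : Type*} [AddCommGroup A]

/-- the permutation of `F × A` attached to a generator -/
noncomputable def stepPerm (Ψ : F → IsFreeGroup.Generators F → A) (y : IsFreeGroup.Generators F) :
    Equiv.Perm (F × A) where
  toFun p := (p.1 * IsFreeGroup.of y, p.2 + Ψ p.1 y)
  invFun p := (p.1 * (IsFreeGroup.of y)⁻¹, p.2 - Ψ (p.1 * (IsFreeGroup.of y)⁻¹) y)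
  left_inv p := by ext <;> simp
  right_inv p := by ext <;> simp

theorem free_ind (p : F → Prop) (h1 : p 1)
    (hy : ∀ g y, p (g * IsFreeGroup.of y) ↔ p g) (g : F) : p g := by
  let H : Subgroup F :=
    { carrier := {h | ∀ g, p (g * h) ↔ p g}
      mul_mem' := by
        intro a b ha hb g
        rw [← mul_assoc]
        exact (hb _).trans (ha _)
      one_mem' := by intro g; simp
      inv_mem' := by
        intro a ha g
        have := ha (g * a⁻¹)
        simpa using this.symm }
  let φ : F →* H := IsFreeGroup.lift (fun y => ⟨IsFreeGroup.of y, fun g => hy g y⟩)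
  have h : H.subtype.comp φ = MonoidHom.id F := by
    apply IsFreeGroup.ext_hom
    intro y
    simp [φ]
  have h2 : g ∈ H := by
    have := DFunLike.congr_fun h g
    simp only [MonoidHom.comp_apply, MonoidHom.id_apply] at this
    rw [← this]
    exact (φ g).2
  have := h2 1
  rw [one_mul] at this
  exact this.2 h1

theorem rec_exists (Ψ : F → IsFreeGroup.Generators F → A) :
    ∃ ψ : F → A, ψ 1 = 0 ∧ ∀ g y, ψ (g * IsFreeGroup.of y) = ψ g + Ψ g y := by
  let ρ : F →* Equiv.Perm (F × A) := IsFreeGroup.lift (fun y => (stepPerm Ψ y)⁻¹)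
  have hρ : ∀ y, (ρ (IsFreeGroup.of y))⁻¹ = stepPerm Ψ y := by
    intro y; simp [ρ]
  have step : ∀ g y, (ρ (g * IsFreeGroup.of y))⁻¹ (1, 0) = stepPerm Ψ y ((ρ g)⁻¹ (1, 0)) := by
    intro g y
    rw [map_mul, mul_inv_rev, hρ]; rfl
  have h1 : ∀ g, ((ρ g)⁻¹ (1, 0)).1 = g := by
    intro g
    refine free_ind (fun g => ((ρ g)⁻¹ (1, 0)).1 = g) (by simp) ?_ g
    intro g y
    simp only [step]
    simp [stepPerm]
  refine ⟨fun g => ((ρ g)⁻¹ (1, 0)).2, by simp, ?_⟩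
  intro g y
  have h2 := h1 g
  simp only [step]
  change _ + Ψ ((ρ g)⁻¹ (1, 0)).1 y = _
  rw [h2]

noncomputable def recSol (Ψ : F → IsFreeGroup.Generators F → A) : F → A :=
  Classical.choose (rec_exists Ψ)

theorem recSol_one (Ψ : F → IsFreeGroup.Generators F → A) : recSol Ψ 1 = 0 :=
  (Classical.choose_spec (rec_exists Ψ)).1

theorem recSol_mul (Ψ : F → IsFreeGroup.Generators F → A) (g : F) (y) :
    recSol Ψ (g * IsFreeGroup.of y) = recSol Ψ g + Ψ g y :=
  (Classical.choose_spec (rec_exists Ψ)).2 g y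

theorem recSol_of (Ψ : F → IsFreeGroup.Generators F → A) (y) :
    recSol Ψ (IsFreeGroup.of y) = Ψ 1 y := by
  have := recSol_mul Ψ 1 y
  simpa [recSol_one] using this

theorem recSol_zero (g : F) : recSol (fun _ _ => (0 : A)) g = 0 := by
  refine free_ind (fun g => recSol (fun _ _ => (0 : A)) g = 0) (recSol_one _) ?_ g
  intro g y
  simp only [recSol_mul, add_zero]

/-- `H^2(F, A) = 0` -/
theorem split2 (E : F → F → A)
    (hE : ∀ a b c, E b c - E (a * b) c + E a (b * c) - E a b = 0)
    (h1 : ∀ g, E g 1 = 0) :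
    ∃ φ : F → A, φ 1 = 0 ∧ ∀ g h, φ (g * h) = φ g + φ h + E g h := by
  refine ⟨recSol (fun g y => E g (IsFreeGroup.of y)), recSol_one _, ?_⟩
  set φ := recSol (fun g y => E g (IsFreeGroup.of y)) with hφ
  intro g h
  refine free_ind (fun h => φ (g * h) = φ g + φ h + E g h) ?_ ?_ h
  · simp [hφ, recSol_one, h1]
  · intro h y
    have e1 : φ (g * (h * IsFreeGroup.of y)) = φ (g * h) + E (g * h) (IsFreeGroup.of y) := by
      rw [← mul_assoc, hφ, recSol_mul]
    have e2 : φ (h * IsFreeGroup.of y) = φ h + E h (IsFreeGroup.of y) := by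
      rw [hφ, recSol_mul]
    have e3 := hE g h (IsFreeGroup.of y)
    have e4 : E g (h * IsFreeGroup.of y)
        = E g h - E h (IsFreeGroup.of y) + E (g * h) (IsFreeGroup.of y) := by
      rw [← sub_eq_zero, ← e3]; abel
    rw [e1, e2, e4]
    constructor
    · intro H
      rw [← sub_eq_zero] at H ⊢
      rw [← H]; abel
    · intro H
      rw [← sub_eq_zero] at H ⊢
      rw [← H]; abel

noncomputable def sol3 (t : F → F → F → A) (k : F) : F → A :=
  recSol (fun g y => t k g (IsFreeGroup.of y))

theorem sol3_congr (t : F → F → F → A) (k k' : F) (h : ∀ a b, t k a b = t k' a b) :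
    sol3 t k = sol3 t k' := by
  unfold sol3
  simp only [h]

theorem sol3_zero (t : F → F → F → A) (k : F) (h : ∀ a b, t k a b = 0) (g : F) :
    sol3 t k g = 0 := by
  unfold sol3
  simp only [h]
  exact recSol_zero g

theorem sol3_one (t : F → F → F → A) (k : F) : sol3 t k 1 = 0 := recSol_one _

/-- `H^3(F, A) = 0` -/
theorem sol3_spec (t : F → F → F → A)
    (ht : ∀ a b c d, t b c d - t (a * b) c d + t a (b * c) d - t a b (c * d) + t a b c = 0)
    (h1 : ∀ a b, t a b 1 = 0) (h2 : ∀ a b, t a 1 b = 0) (a b c : F) :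
    sol3 t b c - sol3 t (a * b) c + sol3 t a (b * c) - sol3 t a b = t a b c := by
  have hy : ∀ k y, sol3 t k (IsFreeGroup.of y) = 0 := by
    intro k y
    unfold sol3
    rw [recSol_of, h2]
  have hm : ∀ k g y, sol3 t k (g * IsFreeGroup.of y) = sol3 t k g + t k g (IsFreeGroup.of y) := by
    intro k g y
    unfold sol3
    rw [recSol_mul]
  refine free_ind (fun c => sol3 t b c - sol3 t (a * b) c + sol3 t a (b * c) - sol3 t a b
    = t a b c) ?_ ?_ c
  · simp [sol3_one, h1]
  · intro c y
    have e1 : sol3 t a (b * (c * IsFreeGroup.of y))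
        = sol3 t a (b * c) + t a (b * c) (IsFreeGroup.of y) := by
      rw [← mul_assoc, hm]
    have e2 : t a b (c * IsFreeGroup.of y) = t b c (IsFreeGroup.of y)
        - t (a * b) c (IsFreeGroup.of y) + t a (b * c) (IsFreeGroup.of y) + t a b c := by
      have := ht a b c (IsFreeGroup.of y)
      rw [← sub_eq_zero, ← neg_eq_zero, ← this]; abel
    simp only [e1, e2, hm]
    constructor
    · intro H
      rw [← sub_eq_zero] at H ⊢
      rw [← H]; abel
    · intro H
      rw [← sub_eq_zero] at H ⊢
      rw [← H]; abel

end Rec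

section Core
variable {F : Type*} [Group F] {M A : Type*} [AddCommGroup M] [AddCommGroup A]
  [DistribMulAction F M]

/-- the factor set -/
def fac (m : F → M) (g h : F) : M := m (g * h) - m g - g • m h

/-- the cup-one correction -/
def nuc (m : F → M) (B : M →+ M →+ A) (a b c : F) : A :=
  B (fac m a (b * c)) (a • fac m b c) - B (fac m (a * b) c) (fac m a b)

def tc (m : F → M) (B : M →+ M →+ A) (a b c : F) : A :=
  B (fac m a b) ((a * b) • m c) - B ((a * b) • m c) (fac m a b) + nuc m B a b c

def uc (m : F → M) (B : M →+ M →+ A) (a b c : F) : A :=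
  B (m a) (a • fac m b c) - B (a • fac m b c) (m a) + nuc m B a b c

theorem tc_shift (m : F → M) (B : M →+ M →+ A) (hB : ∀ (g : F) x y, B (g • x) (g • y) = B x y)
    (g a b c : F) : tc m B a b c =
    B (g • fac m a b) ((g * a * b) • m c) - B ((g * a * b) • m c) (g • fac m a b) +
    (B (g • fac m a (b * c)) ((g * a) • fac m b c) - B (g • fac m (a * b) c) (g • fac m a b)) := by
  unfold tc nuc
  rw [mul_assoc g a b]
  simp only [mul_smul g, hB]

theorem uc_shift (m : F → M) (B : M →+ M →+ A) (hB : ∀ (g : F) x y, B (g • x) (g • y) = B x y)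
    (g a b c : F) : uc m B a b c =
    B (g • m a) ((g * a) • fac m b c) - B ((g * a) • fac m b c) (g • m a) +
    (B (g • fac m a (b * c)) ((g * a) • fac m b c) - B (g • fac m (a * b) c) (g • fac m a b)) := by
  unfold uc nuc
  simp only [mul_smul g, hB]

set_option maxHeartbeats 2000000 in
theorem tc_cocycle (m : F → M) (B : M →+ M →+ A) (hB : ∀ (g : F) x y, B (g • x) (g • y) = B x y)
    (a b c d : F) : tc m B b c d - tc m B (a * b) c d + tc m B a (b * c) d
      - tc m B a b (c * d) + tc m B a b c = 0 := by
  rw [tc_shift m B hB a b c d]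
  simp only [tc, nuc, fac, smul_sub, map_sub, AddMonoidHom.sub_apply, smul_smul, mul_assoc]
  abel

set_option maxHeartbeats 2000000 in
theorem uc_cocycle (m : F → M) (B : M →+ M →+ A) (hB : ∀ (g : F) x y, B (g • x) (g • y) = B x y)
    (a b c d : F) : uc m B b c d - uc m B (a * b) c d + uc m B a (b * c) d
      - uc m B a b (c * d) + uc m B a b c = 0 := by
  rw [uc_shift m B hB a b c d]
  simp only [uc, nuc, fac, smul_sub, map_sub, AddMonoidHom.sub_apply, smul_smul, mul_assoc]
  abel

theorem uc_sub_tc (m : F → M) (B : M →+ M →+ A) (hB : ∀ (g : F) x y, B (g • x) (g • y) = B x y)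
    (a b c : F) :
    (B (m b) (b • m c) - B (b • m c) (m b)) - (B (m (a * b)) ((a * b) • m c)
      - B ((a * b) • m c) (m (a * b))) + (B (m a) (a • m (b * c)) - B (a • m (b * c)) (m a))
      - (B (m a) (a • m b) - B (a • m b) (m a)) = uc m B a b c - tc m B a b c := by
  rw [← hB a (m b), ← hB a (b • m c)]
  simp only [tc, uc, nuc, fac, smul_sub, map_sub, AddMonoidHom.sub_apply, smul_smul, mul_assoc]
  abel

variable [IsFreeGroup F]

theorem core (R : Subgroup F) [hR : R.Normal] (m : F → M)
    (hm : ∀ r ∈ R, ∀ g, m (r * g) = m r + m g)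
    (hc : ∀ r ∈ R, ∀ g, m (g * r * g⁻¹) = g • m r)
    (ht : ∀ r ∈ R, ∀ x : M, r • x = x)
    (B : M →+ M →+ A) (hB : ∀ (g : F) x y, B (g • x) (g • y) = B x y) :
    ∃ φ : F → A, φ 1 = 0 ∧
      (∀ r ∈ R, ∀ s ∈ R, φ (r * s) = φ r + φ s + (B (m r) (m s) - B (m s) (m r))) ∧
      ∀ g h, ∀ r ∈ R, φ (g * r * h) - φ (g * h) - φ (r * h) + φ h - φ (g * r) + φ g + φ r = 0 := by
  have m1 : m 1 = 0 := by
    have := hm 1 R.one_mem 1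
    simpa using this
  have hsw : ∀ g, ∀ r ∈ R, ∀ h, m (g * (r * h)) = g • m r + m (g * h) := by
    intro g r hr h
    rw [← hc r hr, ← hm _ (hR.conj_mem r hr g)]
    congr 1
    group
  have hsw1 : ∀ g, ∀ r ∈ R, m (g * r) = g • m r + m g := by
    intro g r hr
    have := hsw g r hr 1
    simpa using this
  have f1 : ∀ r ∈ R, ∀ g h, fac m (r * g) h = fac m g h := by
    intro r hr g h
    simp only [fac, mul_assoc, mul_smul, hm r hr, ht r hr]
    abel
  have f2 : ∀ r ∈ R, ∀ g h, fac m g (r * h) = fac m g h := by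
    intro r hr g h
    simp only [fac, hsw g r hr, hm r hr, smul_add]
    abel
  have f3 : ∀ r ∈ R, ∀ g h, fac m (g * r) h = fac m g h := by
    intro r hr g h
    have := f1 _ (hR.conj_mem r hr g) g h
    rw [← this]; congr 1; group
  have f4 : ∀ r ∈ R, ∀ g h, fac m g (h * r) = fac m g h := by
    intro r hr g h
    have := f2 _ (hR.conj_mem r hr h) g h
    rw [← this]; congr 1; group
  have f5 : ∀ g, fac m g 1 = 0 := by
    intro g; simp [fac, m1]
  have f6 : ∀ g, fac m 1 g = 0 := by
    intro g; simp [fac, m1]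
  have f7 : ∀ r ∈ R, ∀ g, fac m r g = 0 := by
    intro r hr g
    have := f1 r hr 1 g
    rwa [mul_one, f6] at this
  have f8 : ∀ r ∈ R, ∀ g, fac m g r = 0 := by
    intro r hr g
    have := f2 r hr g 1
    rwa [mul_one, f5] at this
  -- properties of the two three-cocycles
  have t1 : ∀ a b, tc m B a b 1 = 0 := by
    intro a b; simp [tc, nuc, f5, m1]
  have t2 : ∀ a, ∀ r ∈ R, ∀ b, tc m B a r b = 0 := by
    intro a r hr b; simp [tc, nuc, f7 r hr, f8 r hr]
  have t3 : ∀ r ∈ R, ∀ a b, tc m B r a b = 0 := by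
    intro r hr a b; simp [tc, nuc, f7 r hr]
  have t4 : ∀ r ∈ R, ∀ g a b, tc m B (g * r) a b = tc m B g a b := by
    intro r hr g a b
    have hx : ∀ x : M, r • x = x := ht r hr
    have e : g * r * a = g * a * (a⁻¹ * r * a) := by group
    have hr' : a⁻¹ * r * a ∈ R := by simpa using hR.conj_mem r hr a⁻¹
    have hx' := ht _ hr'
    have e2 : ∀ x : M, (g * r * a) • x = (g * a) • x := by
      intro x; rw [e, mul_smul (g * a), hx']
    have e3 : ∀ x : M, (g * r) • x = g • x := by
      intro x; rw [mul_smul, hx]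
    have e4 : ∀ h, fac m (g * r * a) h = fac m (g * a) h := by
      intro h; rw [e, f3 _ hr']
    simp only [tc, nuc, f3 r hr, e2, e3, e4]
  have u1 : ∀ a b, ∀ r ∈ R, uc m B a b r = 0 := by
    intro a b r hr; simp [uc, nuc, f8 r hr]
  have u2 : ∀ a b, uc m B a 1 b = 0 := by
    intro a b; simp [uc, nuc, f5, f6]
  have u3 : ∀ a b, uc m B 1 a b = 0 := by
    intro a b; simp [uc, nuc, f6, m1]
  have u4 : ∀ r ∈ R, ∀ g a b, uc m B a b (r * g) = uc m B a b g := by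
    intro r hr g a b
    have e : b * (r * g) = (b * r * b⁻¹) * (b * g) := by group
    have hr' := hR.conj_mem r hr b
    have e4 : ∀ h, fac m h (b * (r * g)) = fac m h (b * g) := by
      intro h; rw [e, f2 _ hr']
    simp only [uc, nuc, f2 r hr, e4]
  let v : F → F → F → A := fun a b c => uc m B c⁻¹ b⁻¹ a⁻¹
  let l := sol3 (tc m B)
  let l' := sol3 v
  have hl : ∀ a b c, l b c - l (a * b) c + l a (b * c) - l a b = tc m B a b c :=
    sol3_spec (tc m B) (tc_cocycle m B hB) t1 (fun a b => t2 a 1 R.one_mem b)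
  have hl' : ∀ a b c, l' b c - l' (a * b) c + l' a (b * c) - l' a b = v a b c := by
    refine sol3_spec v ?_ ?_ ?_
    · intro a b c d
      have := uc_cocycle m B hB d⁻¹ c⁻¹ b⁻¹ a⁻¹
      simp only [v, mul_inv_rev]
      rw [← this]; abel
    · intro a b; simp [v, u3]
    · intro a b; simp [v, u2]
  have la : ∀ r ∈ R, ∀ g, l r g = 0 := fun r hr g => sol3_zero _ _ (t3 r hr) g
  have lb : ∀ r ∈ R, ∀ k g, l (k * r) g = l k g := fun r hr k g =>
    congrFun (sol3_congr _ _ _ (t4 r hr k)) g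
  have lc : ∀ g, l g 1 = 0 := fun g => sol3_one _ _
  have ld : ∀ r ∈ R, ∀ g h, l g (r * h) = l g r + l g h := by
    intro r hr g h
    have := hl g r h
    rw [la r hr, lb r hr, t2 g r hr] at this
    rw [← sub_eq_zero, ← this]; abel
  have la' : ∀ r ∈ R, ∀ g, l' r g = 0 := fun r hr g =>
    sol3_zero _ _ (fun a b => by
      simp only [v]; exact u1 _ _ _ (R.inv_mem hr)) g
  have lb' : ∀ r ∈ R, ∀ k g, l' (k * r) g = l' k g := fun r hr k g =>
    congrFun (sol3_congr _ _ _ (fun a b => by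
      simp only [v, mul_inv_rev]; exact u4 _ (R.inv_mem hr) _ _ _)) g
  obtain ⟨φ, h1, hφ⟩ := split2 (fun g h => B (m g) (g • m h) - B (g • m h) (m g)
      + l g h + l' h⁻¹ g⁻¹) (by
    intro a b c
    have e1 := hl a b c
    have e2 := hl' c⁻¹ b⁻¹ a⁻¹
    have e3 := uc_sub_tc m B hB a b c
    simp only [v, inv_inv] at e2
    rw [← e1, ← e2] at e3
    rw [← sub_eq_zero] at e3
    simp only [mul_inv_rev]
    rw [← e3]; abel) (by
    intro g
    simp [m1, lc, la' 1 R.one_mem])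
  refine ⟨φ, h1, ?_, ?_⟩
  · intro r hr s hs
    rw [hφ, la r hr, la' _ (R.inv_mem hs), ht r hr]
    abel
  · intro g h r hr
    have e1 := hφ g (r * h)
    have e2 := hφ g h
    have e3 := hφ g r
    rw [← mul_assoc] at e1
    rw [mul_inv_rev, lb' _ (R.inv_mem hr), ld r hr, hm r hr] at e1
    rw [la' _ (R.inv_mem hr)] at e3
    rw [e1, e2, e3]
    simp only [smul_add, map_add, AddMonoidHom.add_apply]
    abel

end Core

section Concrete
variable {F : Type*} [Group F] (R : Subgroup F)

/-- additive abelianization of `R` -/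
abbrev Mab : Type _ := Additive (Abelianization R)

/-- the class of an element of `R` -/
def cls (r : R) : Mab R := Additive.ofMul (Abelianization.of r)

theorem cls_one : cls R 1 = 0 := rfl

theorem cls_mul (r s : R) : cls R (r * s) = cls R r + cls R s := by
  simp [cls]

theorem cls_surj (x : Mab R) : ∃ r, cls R r = x := by
  obtain ⟨r, hr⟩ := QuotientGroup.mk_surjective (s := commutator R) (Additive.toMul x)
  exact ⟨r, hr⟩

theorem cls_eq_zero (r : R) (h : cls R r = 0) : (r : F) ∈ ⁅R, R⁆ := by
  have h1 : r ∈ (Abelianization.of : R →* _).ker := h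
  rw [Abelianization.ker_of] at h1
  have h2 : (r : F) ∈ (commutator R).map R.subtype := ⟨r, h1, rfl⟩
  rw [commutator_def, Subgroup.map_commutator] at h2
  rwa [← MonoidHom.range_eq_map, Subgroup.range_subtype] at h2

variable [R.Normal]

/-- conjugation action -/
noncomputable def actHom : F →* AddMonoid.End (Mab R) where
  toFun g := MonoidHom.toAdditive (Abelianization.map (MulAut.conjNormal g : MulAut R).toMonoidHom)
  map_one' := by
    apply AddMonoidHom.ext
    intro x
    obtain ⟨r, rfl⟩ := cls_surj R x
    change cls R (MulAut.conjNormal 1 r) = cls R r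
    simp
  map_mul' g h := by
    apply AddMonoidHom.ext
    intro x
    obtain ⟨r, rfl⟩ := cls_surj R x
    change cls R (MulAut.conjNormal (g * h) r)
      = cls R (MulAut.conjNormal g (MulAut.conjNormal h r))
    rw [map_mul]; rfl

theorem actHom_cls (g : F) (r : R) : actHom R g (cls R r) = cls R (MulAut.conjNormal g r) := rfl

theorem exists_m : ∃ m : F → Mab R, (∀ r : R, m r = cls R r) ∧
    ∀ (r : R) g, m (r * g) = m r + m g := by
  let w : F → F := fun g => (QuotientGroup.mk g : F ⧸ R).out
  have hw : ∀ g, g * (w g)⁻¹ ∈ R := by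
    intro g
    have : (QuotientGroup.mk (w g) : F ⧸ R) = QuotientGroup.mk g := Quotient.out_eq _
    rw [QuotientGroup.eq_iff_div_mem] at this
    have := R.inv_mem this
    simpa [div_eq_mul_inv] using this
  have hw2 : ∀ (r : R) g, w (r * g) = w g := by
    intro r g
    have : (QuotientGroup.mk (r * g) : F ⧸ R) = QuotientGroup.mk g := by
      rw [QuotientGroup.eq_iff_div_mem]
      simp
    simp only [w, this]
  let n : F → Mab R := fun g => cls R ⟨g * (w g)⁻¹, hw g⟩
  have hn : ∀ (r : R) g, n (r * g) = cls R r + n g := by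
    intro r g
    simp only [n]
    rw [← cls_mul]
    congr 1
    ext
    simp [hw2, mul_assoc]
  have h1 : ∀ r : R, n r - n 1 = cls R r := by
    intro r
    have := hn r 1
    rw [mul_one] at this
    rw [this]; abel
  refine ⟨fun g => n g - n 1, h1, ?_⟩
  intro r g
  simp only [h1, hn]
  abel

theorem main_group [IsFreeGroup F] {A : Type*} [AddCommGroup A] (β : R → R → A)
    (hl : ∀ r r' s, β (r * r') s = β r s + β r' s)
    (hr : ∀ r s s', β r (s * s') = β r s + β r s')
    (hinv : ∀ (g : F) r s, β (MulAut.conjNormal g r) (MulAut.conjNormal g s) = β r s) :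
    ∃ φ : F → A, φ 1 = 0 ∧
      (∀ r s : R, φ (r * s) = φ r + φ s + (β r s - β s r)) ∧
      ∀ g h, ∀ r ∈ R, φ (g * r * h) - φ (g * h) - φ (r * h) + φ h - φ (g * r) + φ g + φ r = 0 := by
  let _ : DistribMulAction F (Mab R) := DistribMulAction.compHom (Mab R) (actHom R)
  have hs : ∀ (g : F) (r : R), g • cls R r = cls R (MulAut.conjNormal g r) := fun g r =>
    actHom_cls R g r
  obtain ⟨m, hm1, hm2⟩ := exists_m R
  let β1 : R → Mab R →+ A := fun r => MonoidHom.toAdditiveLeft (Abelianization.lift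
    (MonoidHom.mk' (fun s => Multiplicative.ofAdd (β r s)) (fun s s' => by rw [hr]; rfl)))
  have hβ1 : ∀ r s, β1 r (cls R s) = β r s := by
    intro r s
    simp only [β1, cls]
    rfl
  let B : Mab R →+ Mab R →+ A := MonoidHom.toAdditiveLeft (Abelianization.lift
    (MonoidHom.mk' (fun r => Multiplicative.ofAdd (β1 r)) (fun r r' => by
      rw [← ofAdd_add]
      congr 1
      apply AddMonoidHom.ext
      intro x
      obtain ⟨s, rfl⟩ := cls_surj R x
      rw [AddMonoidHom.add_apply, hβ1, hβ1, hβ1, hl])))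
  have hB : ∀ r s, B (cls R r) (cls R s) = β r s := by
    intro r s
    rw [← hβ1]
    rfl
  obtain ⟨φ, h1, h2, h3⟩ := core R m (fun r hr g => hm2 ⟨r, hr⟩ g)
    (by
      intro r hr g
      have e := hm1 (MulAut.conjNormal g ⟨r, hr⟩)
      rw [MulAut.conjNormal_apply] at e
      have e2 := hm1 ⟨r, hr⟩
      simp only at e e2
      rw [e, e2, hs])
    (by
      intro r hr x
      obtain ⟨s, rfl⟩ := cls_surj R x
      rw [hs]
      have : MulAut.conjNormal r s = (⟨r, hr⟩ : R) * s * (⟨r, hr⟩ : R)⁻¹ := by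
        ext; simp
      rw [this, cls_mul, cls_mul, add_right_comm, ← cls_mul]
      simp [cls])
    B
    (by
      intro g x y
      obtain ⟨r, rfl⟩ := cls_surj R x
      obtain ⟨s, rfl⟩ := cls_surj R y
      rw [hs, hs, hB, hB, hinv])
  refine ⟨φ, h1, ?_, h3⟩
  intro r s
  rw [h2 r r.2 s s.2, hm1, hm1, hB, hB]

end Concrete

section Comm
open scoped commutatorElement IsMulCommutative
variable {F : Type} [Group F] (R : Subgroup F) {A : Type*} [AddCommGroup A]

theorem beta_comm (γ : R → A) (h : ∀ r s, γ (r * s) = γ r + γ s) (a : R)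
    (ha : (a : F) ∈ ⁅R, R⁆) : γ a = 0 := by
  let f : R →* Multiplicative A := MonoidHom.mk' (fun r => Multiplicative.ofAdd (γ r))
    (fun r s => by rw [h]; rfl)
  have h1 : a ∈ commutator R := by
    have h2 : ⁅R, R⁆ = (commutator R).map R.subtype := by
      rw [commutator_def, Subgroup.map_commutator, ← MonoidHom.range_eq_map,
        Subgroup.range_subtype]
    rw [h2] at ha
    obtain ⟨b, hb, e⟩ := ha
    have : b = a := Subtype.ext e
    rwa [← this]
  exact Abelianization.commutator_subset_ker f h1

variable [R.Normal]

theorem phi_ind (β : R → R → A)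
    (hl : ∀ r r' s, β (r * r') s = β r s + β r' s)
    (hr : ∀ r s s', β r (s * s') = β r s + β r s')
    (φ : F → A) (φ1 : φ 1 = 0)
    (hφ : ∀ r s : R, φ (r * s) = φ r + φ s + (β r s - β s r))
    (P : F → A → Prop) (P1 : P 1 0)
    (Pm : ∀ a b x y, a ∈ ⁅R, R⁆ → b ∈ ⁅R, R⁆ → P a x → P b y → P (a * b) (x + y))
    (Pi : ∀ a x, a ∈ ⁅R, R⁆ → P a x → P a⁻¹ (-x))
    (Pc : ∀ r s : R, P (⁅(r : F), (s : F)⁆) ((2 : ℤ) • (β r s - β s r)))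
    (a : F) (ha : a ∈ ⁅R, R⁆) : P a (φ a) := by
  have hle : ⁅R, R⁆ ≤ R := Subgroup.commutator_le_left R R
  have hb1 : ∀ (a s : R), (a : F) ∈ ⁅R, R⁆ → β a s = 0 := fun a s ha =>
    beta_comm R (fun r => β r s) (fun r r' => hl r r' s) a ha
  have hb2 : ∀ (a s : R), (a : F) ∈ ⁅R, R⁆ → β s a = 0 := fun a s ha =>
    beta_comm R (fun r => β s r) (fun r r' => hr s r r') a ha
  have add : ∀ a ∈ ⁅R, R⁆, ∀ b ∈ R, φ (a * b) = φ a + φ b := by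
    intro a ha b hb
    have := hφ ⟨a, hle ha⟩ ⟨b, hb⟩
    rw [hb1 ⟨a, hle ha⟩ _ ha, hb2 ⟨a, hle ha⟩ _ ha] at this
    simpa using this
  have key : a ∈ ⁅R, R⁆ ∧ P a (φ a) := by
    have ha' := ha
    rw [Subgroup.commutator_def] at ha'
    induction ha' using Subgroup.closure_induction with
    | mem x hx =>
      refine ⟨ha, ?_⟩
      obtain ⟨r, hr, s, hs, rfl⟩ := hx
      have e : ⁅r, s⁆ * (s * r) = r * s := by simp [commutatorElement_def, mul_assoc]
      have e1 := add _ ha (s * r) (R.mul_mem hs hr)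
      have e2 := hφ ⟨r, hr⟩ ⟨s, hs⟩
      have e3 := hφ ⟨s, hs⟩ ⟨r, hr⟩
      simp only at e2 e3
      rw [e, e2, e3] at e1
      have e4 : φ ⁅r, s⁆ = (2 : ℤ) • (β ⟨r, hr⟩ ⟨s, hs⟩ - β ⟨s, hs⟩ ⟨r, hr⟩) := by
        rw [← sub_eq_zero] at e1 ⊢
        rw [← neg_eq_zero, ← e1]; abel
      rw [e4]
      exact Pc ⟨r, hr⟩ ⟨s, hs⟩
    | one => exact ⟨Subgroup.one_mem _, by rw [φ1]; exact P1⟩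
    | mul x y hx hy ihx ihy =>
      rw [← Subgroup.commutator_def] at hx hy
      refine ⟨ha, ?_⟩
      rw [add x hx y (hle hy)]
      exact Pm _ _ _ _ hx hy (ihx hx).2 (ihy hy).2
    | inv x hx ih =>
      rw [← Subgroup.commutator_def] at hx
      refine ⟨ha, ?_⟩
      have e := add x hx x⁻¹ (R.inv_mem (hle hx))
      rw [mul_inv_cancel, φ1] at e
      have e4 : φ x⁻¹ = - φ x := (neg_eq_of_add_eq_zero_right e.symm).symm
      rw [e4]
      exact Pi _ _ hx (ih hx).2
  exact key.2

theorem comm_mul_left_of_central {Q : Type*} [Group Q] (a b c : Q)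
    (h : ⁅b, c⁆ ∈ Subgroup.center Q) : ⁅a * b, c⁆ = ⁅a, c⁆ * ⁅b, c⁆ := by
  have h1 : a * ⁅b, c⁆ = ⁅b, c⁆ * a := Subgroup.mem_center_iff.1 h a
  have h2 : ⁅a, c⁆ * ⁅b, c⁆ = ⁅b, c⁆ * ⁅a, c⁆ := Subgroup.mem_center_iff.1 h _
  have e : ⁅a * b, c⁆ = a * ⁅b, c⁆ * a⁻¹ * ⁅a, c⁆ := by
    simp [commutatorElement_def, mul_assoc]
  rw [e, h1, h2]; simp [mul_assoc]

theorem comm_mul_right_of_central {Q : Type*} [Group Q] (a b c : Q)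
    (h : ⁅a, c⁆ ∈ Subgroup.center Q) : ⁅a, b * c⁆ = ⁅a, b⁆ * ⁅a, c⁆ := by
  have h1 : b * ⁅a, c⁆ = ⁅a, c⁆ * b := Subgroup.mem_center_iff.1 h b
  have e : ⁅a, b * c⁆ = ⁅a, b⁆ * (b * ⁅a, c⁆ * b⁻¹) := by
    simp [commutatorElement_def, mul_assoc]
  rw [e, h1]; simp [mul_assoc]

/-- the fourth power statement in the group `F` -/
theorem fourth_power [IsFreeGroup F] (a : F) (ha : a ∈ ⁅R, R⁆)
    (H : ∀ (A : Type) [AddCommGroup A] (φ : F → A), φ 1 = 0 →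
      (∀ g h, ∀ r ∈ R,
        φ (g * r * h) - φ (g * h) - φ (r * h) + φ h - φ (g * r) + φ g + φ r = 0) → φ a = 0) :
    a ^ 4 ∈ ⁅⁅R, R⁆, (⊤ : Subgroup F)⁆ := by
  set N := ⁅⁅R, R⁆, (⊤ : Subgroup F)⁆ with hN
  let π : F →* F ⧸ N := QuotientGroup.mk' N
  have cen : ∀ c ∈ ⁅R, R⁆, π c ∈ Subgroup.center (F ⧸ N) := by
    intro c hc
    rw [Subgroup.mem_center_iff]
    intro q
    obtain ⟨u, rfl⟩ := QuotientGroup.mk'_surjective N q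
    have h1 : ⁅c, u⁆ ∈ N := Subgroup.commutator_mem_commutator hc (Subgroup.mem_top u)
    have h2 : π ⁅c, u⁆ = 1 := (QuotientGroup.eq_one_iff _).2 h1
    rw [map_commutatorElement, commutatorElement_eq_one_iff_mul_comm] at h2
    exact h2.symm
  have cen2 : ∀ r s : R, ⁅π r, π s⁆ ∈ Subgroup.center (F ⧸ N) := by
    intro r s
    rw [← map_commutatorElement]
    exact cen _ (Subgroup.commutator_mem_commutator r.2 s.2)
  let β : R → R → Additive (Subgroup.center (F ⧸ N)) := fun r s =>
    Additive.ofMul ⟨⁅π r, π s⁆, cen2 r s⟩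
  have hl : ∀ r r' s, β (r * r') s = β r s + β r' s := by
    intro r r' s
    simp only [β]
    rw [← ofMul_mul]
    congr 1
    ext
    simp only [Subgroup.coe_mul, map_mul]
    exact comm_mul_left_of_central _ _ _ (cen2 r' s)
  have hr : ∀ r s s', β r (s * s') = β r s + β r s' := by
    intro r s s'
    simp only [β]
    rw [← ofMul_mul]
    congr 1
    ext
    simp only [Subgroup.coe_mul, map_mul]
    exact comm_mul_right_of_central _ _ _ (cen2 r s')
  have hsw : ∀ r s, β s r = - β r s := by
    intro r s
    simp only [β]
    rw [← ofMul_inv]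
    congr 1
    ext
    simp
  obtain ⟨φ, h1, h2, h3⟩ := main_group R β hl hr (by
    intro g r s
    simp only [β]
    congr 1
    ext
    simp only [MulAut.conjNormal_apply, map_mul, map_inv]
    have := Subgroup.mem_center_iff.1 (cen2 r s) (π g)
    rw [← conjugate_commutatorElement, this]
    simp [mul_assoc])
  have h0 := H _ φ h1 h3
  have h4 := phi_ind R β hl hr φ h1 h2
    (fun a x => ∃ h : π a ∈ Subgroup.center (F ⧸ N),
      x = (4 : ℕ) • Additive.ofMul (⟨π a, h⟩ : Subgroup.center (F ⧸ N)))
    ⟨by rw [map_one]; exact Subgroup.one_mem _, by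
      rw [← ofMul_pow]
      symm
      rw [ofMul_eq_zero]
      ext
      simp⟩
    (by
      rintro a b x y ha hb ⟨h, rfl⟩ ⟨h', rfl⟩
      refine ⟨by rw [map_mul]; exact Subgroup.mul_mem _ h h', ?_⟩
      rw [← nsmul_add, ← ofMul_mul]
      rfl)
    (by
      rintro a x ha ⟨h, rfl⟩
      refine ⟨by rw [map_inv]; exact Subgroup.inv_mem _ h, ?_⟩
      rw [← smul_neg, ← ofMul_inv]
      rfl)
    (by
      intro r s
      refine ⟨cen _ (Subgroup.commutator_mem_commutator r.2 s.2), ?_⟩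
      rw [hsw r s]
      have : Additive.ofMul (⟨π ⁅(r : F), (s : F)⁆,
          cen _ (Subgroup.commutator_mem_commutator r.2 s.2)⟩ : Subgroup.center (F ⧸ N))
          = β r s := by
        simp only [β, map_commutatorElement]
      rw [this]
      abel)
    a ha
  obtain ⟨h, e⟩ := h4
  rw [h0, ← ofMul_pow] at e
  have e2 := ofMul_eq_zero.1 e.symm
  have e3 : π a ^ 4 = 1 := congrArg Subtype.val e2
  rw [← map_pow] at e3
  exact (QuotientGroup.eq_one_iff _).1 e3

end Comm

section Ring
open MonoidAlgebra
open scoped commutatorElement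
variable {F : Type} [Group F]

theorem sub_one_mem_augI (N : Subgroup F) {n : F} (hn : n ∈ N) : of ℤ F n - 1 ∈ augI N := by
  have h : of ℤ F n - 1 ∈ aug N := Submodule.subset_span ⟨n, hn, rfl⟩
  have h2 := Submodule.mul_mem_mul h (Submodule.mem_top (x := (1 : MonoidAlgebra ℤ F)))
  rw [mul_one] at h2
  exact h2

theorem augI_mul_top (N : Subgroup F) : augI N * ⊤ = augI N := by
  unfold augI
  rw [mul_assoc]
  congr 1
  refine le_antisymm le_top ?_
  intro x _
  simpa using Submodule.mul_mem_mul (Submodule.mem_top (R := ℤ) (x := x))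
    (Submodule.mem_top (R := ℤ) (x := (1 : MonoidAlgebra ℤ F)))

theorem augI_mono {N N' : Subgroup F} (h : N ≤ N') : augI N ≤ augI N' := by
  unfold augI aug
  refine mul_le_mul' (Submodule.span_mono ?_) le_rfl
  rintro x ⟨n, hn, rfl⟩
  exact ⟨n, h hn, rfl⟩

theorem augI_eq_span (N : Subgroup F) : augI N =
    Submodule.span ℤ {x | ∃ n ∈ N, ∃ h : F, x = (of ℤ F n - 1) * of ℤ F h} := by
  have ht : (⊤ : Submodule ℤ (MonoidAlgebra ℤ F)) = Submodule.span ℤ (Set.range (of ℤ F)) := by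
    rw [← (MonoidAlgebra.basis F ℤ).span_eq]
    rfl
  unfold augI aug
  rw [ht, Submodule.span_mul_span]
  congr 1
  ext x
  constructor
  · rintro ⟨_, ⟨n, hn, rfl⟩, _, ⟨h, rfl⟩, rfl⟩
    exact ⟨n, hn, h, rfl⟩
  · rintro ⟨n, hn, h, rfl⟩
    exact ⟨_, ⟨n, hn, rfl⟩, _, ⟨h, rfl⟩, rfl⟩

theorem of_mul_sub_one (h n : F) :
    of ℤ F h * (of ℤ F n - 1) = (of ℤ F (h * n * h⁻¹) - 1) * of ℤ F h := by
  rw [mul_sub, sub_mul, ← map_mul, ← map_mul]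
  simp

theorem eval_eq (U R : Subgroup F) [hU : U.Normal] [hR : R.Normal] {A : Type*} [AddCommGroup A]
    (φ : F → A)
    (hφ : ∀ v ∈ U, ∀ r ∈ R, ∀ v' ∈ U, ∀ h, φ (v * r * v' * h) - φ (v * r * h) - φ (v * v' * h)
      + φ (v * h) - φ (r * v' * h) + φ (r * h) + φ (v' * h) - φ h = 0)
    (a : F) (ha : of ℤ F a - 1 ∈ augI U * augI R * augI U) : φ a = φ 1 := by
  let Φ : MonoidAlgebra ℤ F →ₗ[ℤ] A := (MonoidAlgebra.basis F ℤ).constr ℤ φ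
  have hΦ : ∀ g, Φ (of ℤ F g) = φ g := fun g => (MonoidAlgebra.basis F ℤ).constr_basis ℤ φ g
  have hle : augI U * augI R * augI U ≤ LinearMap.ker Φ := by
    rw [augI_eq_span U, augI_eq_span R, Submodule.span_mul_span, Submodule.span_mul_span,
      Submodule.span_le]
    rintro _ ⟨_, ⟨_, ⟨v, hv, h1, rfl⟩, _, ⟨r, hr, h2, rfl⟩, rfl⟩, _, ⟨v', hv', h3, rfl⟩, rfl⟩
    have e : (of ℤ F v - 1) * of ℤ F h1 * ((of ℤ F r - 1) * of ℤ F h2)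
        * ((of ℤ F v' - 1) * of ℤ F h3) =
        (of ℤ F v - 1) * (of ℤ F (h1 * r * h1⁻¹) - 1)
          * (of ℤ F ((h1 * h2) * v' * (h1 * h2)⁻¹) - 1) * of ℤ F (h1 * h2 * h3) := by
      calc _ = (of ℤ F v - 1) * (of ℤ F h1 * (of ℤ F r - 1)) * of ℤ F h2
            * (of ℤ F v' - 1) * of ℤ F h3 := by simp only [mul_assoc]
        _ = (of ℤ F v - 1) * (of ℤ F (h1 * r * h1⁻¹) - 1) * (of ℤ F (h1 * h2)
            * (of ℤ F v' - 1)) * of ℤ F h3 := by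
          rw [of_mul_sub_one, map_mul (of ℤ F) h1 h2]; simp only [mul_assoc]
        _ = _ := by
          rw [of_mul_sub_one (h1 * h2), map_mul (of ℤ F) (h1 * h2) h3]; simp only [mul_assoc]
    have hh := hφ v hv _ (hR.conj_mem r hr h1) _ (hU.conj_mem v' hv' (h1 * h2)) (h1 * h2 * h3)
    generalize h1 * r * h1⁻¹ = r' at hh e
    generalize (h1 * h2) * v' * (h1 * h2)⁻¹ = v'' at hh e
    generalize h1 * h2 * h3 = h at hh e
    change Φ _ = 0
    simp only at e ⊢
    rw [e]
    have e2 : (of ℤ F v - 1) * (of ℤ F r' - 1) * (of ℤ F v'' - 1) * of ℤ F h =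
        of ℤ F (v * r' * v'' * h) - of ℤ F (v * r' * h) - of ℤ F (v * v'' * h)
      + of ℤ F (v * h) - of ℤ F (r' * v'' * h) + of ℤ F (r' * h) + of ℤ F (v'' * h) - of ℤ F h := by
      simp only [map_mul]
      noncomm_ring
    rw [e2, ← hh]
    simp only [map_sub, map_add, hΦ]
  have h0 : Φ (of ℤ F a - 1) = 0 := hle ha
  rw [map_sub, hΦ, ← map_one (of ℤ F), hΦ, sub_eq_zero] at h0
  exact h0

theorem mem_comm (U R : Subgroup F) [hU : U.Normal] [hR : R.Normal]
    (a : F) (ha : of ℤ F a - 1 ∈ augI U * augI R * augI U) : a ∈ ⁅R, R⁆ := by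
  classical
  have haR : a ∈ R := by
    have hiff : ∀ r ∈ R, ∀ g h, (g * r * h ∈ R ↔ g * h ∈ R) := by
      intro r hr g h
      have : g * r * h = (g * r * g⁻¹) * (g * h) := by group
      rw [this]
      exact R.mul_mem_cancel_left (hR.conj_mem r hr g)
    have hiff1 : ∀ r ∈ R, ∀ h, (r * h ∈ R ↔ h ∈ R) := fun r hr h => R.mul_mem_cancel_left hr
    have := eval_eq U R (fun g => if g ∈ R then (1 : ℤ) else 0) (by
      intro v hv r hr v' hv' h
      simp only [mul_assoc r, hiff1 r hr]
      have e1 := hiff r hr v (v' * h)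
      have e2 := hiff r hr v h
      simp only [mul_assoc] at e1 e2
      simp only [mul_assoc, e1, e2]
      ring) a ha
    by_contra hn
    simp [hn, R.one_mem] at this
  obtain ⟨m, hm1, hm2⟩ := exists_m R
  have hm : ∀ g r, ∀ hr : r ∈ R, -m (g * r)⁻¹ = - m g⁻¹ + cls R ⟨r, hr⟩ := by
    intro g r hr
    have := hm2 (⟨r, hr⟩⁻¹) g⁻¹
    rw [hm1] at this
    have e : cls R (⟨r, hr⟩⁻¹) = - cls R ⟨r, hr⟩ := rfl
    rw [e] at this
    rw [mul_inv_rev]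
    simp only [Subgroup.coe_inv] at this
    rw [this]; abel
  have key : ∀ v k, ∀ r ∈ R, (-m (v * r * k)⁻¹) - (-m (v * k)⁻¹)
      - (-m (r * k)⁻¹) + (-m k⁻¹) = 0 := by
    intro v k r hr
    have hr' : k⁻¹ * r * k ∈ R := by simpa using hR.conj_mem r hr k⁻¹
    have e1 := hm (v * k) _ hr'
    have e2 := hm k _ hr'
    have e3 : v * k * (k⁻¹ * r * k) = v * r * k := by group
    have e4 : k * (k⁻¹ * r * k) = r * k := by group
    rw [e3] at e1
    rw [e4] at e2
    rw [e1, e2]; abel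
  have h := eval_eq U R (fun g => - m g⁻¹) (by
    intro v hv r hr v' hv' h
    have e1 := key v (v' * h) r hr
    have e2 := key v h r hr
    simp only [← mul_assoc] at e1 e2
    have := congrArg₂ (· - ·) e1 e2
    simp only [sub_zero] at this
    rw [← this]; abel) a ha
  have h2 := hm 1 a haR
  rw [one_mul] at h2
  rw [h] at h2
  have h3 : cls R ⟨a, haR⟩ = 0 := by simpa using h2
  exact cls_eq_zero R ⟨a, haR⟩ h3

/-- functions on `U` vanishing on the triple product give functionals -/
theorem eval_U (U R : Subgroup F) [hU : U.Normal] [hR : R.Normal] (hRU : R ≤ U)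
    (a : U) (ha : of ℤ F (a : F) - 1 ∈ augI U * augI R * augI U)
    {A : Type*} [AddCommGroup A] (φ : U → A) (φ1 : φ 1 = 0)
    (hφ : ∀ g h, ∀ r ∈ R.subgroupOf U,
      φ (g * r * h) - φ (g * h) - φ (r * h) + φ h - φ (g * r) + φ g + φ r = 0) : φ a = 0 := by
  classical
  let ψ : F → A := fun g => if h : g ∈ U then φ ⟨g, h⟩ else 0
  have hψ : ∀ u : U, ψ u = φ u := fun u => by simp [ψ]
  have hψ0 : ∀ g, g ∉ U → ψ g = 0 := fun u hu => by simp [ψ, hu]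
  have := eval_eq U R ψ (by
    intro v hv r hr v' hv' h
    by_cases hh : h ∈ U
    · have e1 := hφ ⟨v, hv⟩ (⟨v', hv'⟩ * ⟨h, hh⟩) ⟨r, hRU hr⟩ (by simpa [Subgroup.mem_subgroupOf])
      have e2 := hφ ⟨v, hv⟩ ⟨h, hh⟩ ⟨r, hRU hr⟩ (by simpa [Subgroup.mem_subgroupOf])
      simp only [← hψ, Subgroup.coe_mul, ← mul_assoc] at e1 e2
      have := congrArg₂ (· - ·) e1 e2
      simp only [sub_zero] at this
      rw [← this]; abel
    · have n : ∀ u ∈ U, ψ (u * h) = 0 := fun u hu =>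
        hψ0 _ (by rwa [U.mul_mem_cancel_left hu])
      have hr' := hRU hr
      rw [n _ (U.mul_mem (U.mul_mem hv hr') hv'), n _ (U.mul_mem hv hr'), n _ (U.mul_mem hv hv'),
        n _ hv, n _ (U.mul_mem hr' hv'), n _ hr', n _ hv', hψ0 _ hh]
      simp) a ha
  rw [hψ] at this
  rw [this]
  have := hψ 1
  rw [Subgroup.coe_one] at this
  rw [this, φ1]

theorem fourth (U R : Subgroup F) [hU : U.Normal] [hR : R.Normal] [IsFreeGroup F] (hRU : R ≤ U)
    (a : F) (ha : of ℤ F (a : F) - 1 ∈ augI U * augI R * augI U) : a ^ 4 ∈ ⁅⁅R, R⁆, U⁆ := by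
  have hc := mem_comm U R a ha
  have haU : a ∈ U := hRU (Subgroup.commutator_le_left R R hc)
  have hmap : (R.subgroupOf U).map U.subtype = R := by
    rw [Subgroup.subgroupOf_map_subtype, inf_eq_left.2 hRU]
  have hc' : (⟨a, haU⟩ : U) ∈ ⁅R.subgroupOf U, R.subgroupOf U⁆ := by
    have : a ∈ (⁅R.subgroupOf U, R.subgroupOf U⁆).map U.subtype := by
      rw [Subgroup.map_commutator, hmap]; exact hc
    obtain ⟨b, hb, e⟩ := this
    have : b = ⟨a, haU⟩ := Subtype.ext e
    rwa [← this]
  have h := fourth_power (R.subgroupOf U) (⟨a, haU⟩ : U) hc' (by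
    intro A _ φ φ1 hφ
    exact eval_U U R hRU ⟨a, haU⟩ ha φ φ1 hφ)
  have h2 := Subgroup.mem_map_of_mem U.subtype h
  rw [Subgroup.map_commutator, Subgroup.map_commutator, hmap, ← MonoidHom.range_eq_map,
    Subgroup.range_subtype] at h2
  simpa using h2

theorem square (U R : Subgroup F) [hU : U.Normal] [hR : R.Normal] [IsFreeGroup F] (hRU : R ≤ U)
    (K : Submodule ℤ (MonoidAlgebra ℤ F)) (hK1 : augI R * augI R * augI U ≤ K)
    (hK2 : augI U * augI R * augI R ≤ K)
    (a : F) (ha : of ℤ F (a : F) - 1 ∈ augI U * augI R * augI U) : of ℤ F (a ^ 2) - 1 ∈ K := by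
  have hc := mem_comm U R a ha
  have haR : a ∈ R := Subgroup.commutator_le_left R R hc
  have haU : a ∈ U := hRU haR
  have hmap : (R.subgroupOf U).map U.subtype = R := by
    rw [Subgroup.subgroupOf_map_subtype, inf_eq_left.2 hRU]
  have hc' : (⟨a, haU⟩ : U) ∈ ⁅R.subgroupOf U, R.subgroupOf U⁆ := by
    have : a ∈ (⁅R.subgroupOf U, R.subgroupOf U⁆).map U.subtype := by
      rw [Subgroup.map_commutator, hmap]; exact hc
    obtain ⟨b, hb, e⟩ := this
    have : b = ⟨a, haU⟩ := Subtype.ext e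
    rwa [← this]
  set R' := R.subgroupOf U with hR'
  have coeR : ∀ r : R', ((r : U) : F) ∈ R := fun r => r.2
  let d : F → MonoidAlgebra ℤ F := fun g => of ℤ F g - 1
  have hd : ∀ g h, d (g * h) = d g + d h + d g * d h := by
    intro g h; simp only [d, map_mul]; noncomm_ring
  have d1 : d 1 = 0 := by simp only [d, map_one, sub_self]
  have dR : ∀ g ∈ R, d g ∈ augI R := fun g hg => sub_one_mem_augI R hg
  have dU : ∀ g ∈ U, d g ∈ augI U := fun g hg => sub_one_mem_augI U hg
  have k1 : ∀ x ∈ R, ∀ y ∈ R, ∀ v ∈ U, d x * d y * d v ∈ K := fun x hx y hy v hv =>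
    hK1 (Submodule.mul_mem_mul (Submodule.mul_mem_mul (dR x hx) (dR y hy)) (dU v hv))
  let q : F → F → MonoidAlgebra ℤ F ⧸ K := fun x y => K.mkQ (d x * d y)
  have q1 : ∀ x ∈ R, ∀ y ∈ R, ∀ v ∈ R, K.mkQ (d x * d y * d v) = 0 := by
    intro x hx y hy v hv
    rw [Submodule.mkQ_apply, Submodule.Quotient.mk_eq_zero]
    exact k1 x hx y hy v (hRU hv)
  let β : R' → R' → MonoidAlgebra ℤ F ⧸ K := fun r s => K.mkQ (d (r : U) * d (s : U))
  have hl : ∀ r r' s, β (r * r') s = β r s + β r' s := by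
    intro r r' s
    simp only [β, Subgroup.coe_mul, hd, add_mul, map_add]
    rw [q1 _ (coeR r) _ (coeR r') _ (coeR s), add_zero]
  have hr : ∀ r s s', β r (s * s') = β r s + β r s' := by
    intro r s s'
    simp only [β, Subgroup.coe_mul, hd, mul_add, map_add]
    rw [← mul_assoc, q1 _ (coeR r) _ (coeR s) _ (coeR s'), add_zero]
  obtain ⟨φ, φ1, h2, h3⟩ := main_group R' β hl hr (by
    intro g r s
    simp only [β, MulAut.conjNormal_apply, Subgroup.coe_mul, Subgroup.coe_inv]
    rw [← sub_eq_zero, ← map_sub, Submodule.mkQ_apply, Submodule.Quotient.mk_eq_zero]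
    have hx := coeR r
    have hy := coeR s
    have hg : (g : F) ∈ U := g.2
    generalize ((r : U) : F) = x at *
    generalize ((s : U) : F) = y at *
    generalize (g : F) = v at *
    have e0 : of ℤ F v⁻¹ * of ℤ F v = 1 := by rw [← map_mul, inv_mul_cancel, map_one]
    have e0' : of ℤ F v * of ℤ F v⁻¹ = 1 := by rw [← map_mul, mul_inv_cancel, map_one]
    have e1 : ∀ z, d (v * z * v⁻¹) = of ℤ F v * d z * of ℤ F v⁻¹ := by
      intro z; simp only [d, map_mul, mul_sub, sub_mul, mul_one, e0']
    have e2 : d (v * x * v⁻¹) * d (v * y * v⁻¹) - d x * d y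
        = d v * d x * (d y * of ℤ F v⁻¹) + d x * d y * d v⁻¹ := by
      rw [e1, e1]
      have : of ℤ F v * d x * of ℤ F v⁻¹ * (of ℤ F v * d y * of ℤ F v⁻¹)
          = of ℤ F v * d x * (of ℤ F v⁻¹ * of ℤ F v) * d y * of ℤ F v⁻¹ := by
        simp only [mul_assoc]
      rw [this, e0, mul_one]
      have hv : of ℤ F v = d v + 1 := by simp [d]
      have hv' : d v⁻¹ = of ℤ F v⁻¹ - 1 := rfl
      rw [hv, hv']
      noncomm_ring
    rw [e2]
    refine K.add_mem (hK2 ?_) (k1 x hx y hy _ (U.inv_mem hg))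
    refine Submodule.mul_mem_mul (Submodule.mul_mem_mul (dU v hg) (dR x hx)) ?_
    rw [← augI_mul_top R]
    exact Submodule.mul_mem_mul (dR y hy) Submodule.mem_top)
  have h0 : φ ⟨a, haU⟩ = 0 := eval_U U R hRU ⟨a, haU⟩ ha φ φ1 h3
  have hle : ⁅R', R'⁆ ≤ R' := Subgroup.commutator_le_left R' R'
  have hz : ∀ x ∈ ⁅R', R'⁆, ∀ s : R', K.mkQ (d (x : U) * d (s : U)) = 0 := fun x hx s =>
    beta_comm R' (fun r => β r s) (fun r r' => hl r r' s) ⟨x, hle hx⟩ hx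
  have h4 := phi_ind R' β hl hr φ φ1 h2 (fun x z => z = (2 : ℤ) • K.mkQ (d (x : U)))
    (by rw [Subgroup.coe_one, d1, map_zero, smul_zero])
    (by
      rintro x y _ _ hx hy rfl rfl
      have := hz x hx ⟨y, hle hy⟩
      simp only [Subgroup.coe_mul, hd, map_add]
      simp only at this
      rw [this]
      simp)
    (by
      rintro x _ hx rfl
      have e := hz x hx ⟨x⁻¹, hle (Subgroup.inv_mem _ hx)⟩
      have e2 := hd (x : F) (x : F)⁻¹
      rw [mul_inv_cancel] at e2
      rw [d1] at e2
      have e4 := congrArg K.mkQ e2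
      simp only [map_add, map_zero] at e4
      simp only [Subgroup.coe_inv] at e
      rw [e, add_zero] at e4
      have e5 : K.mkQ (d (x : F)⁻¹) = - K.mkQ (d (x : F)) :=
        (neg_eq_of_add_eq_zero_right e4.symm).symm
      simp only [Subgroup.coe_inv]
      rw [e5, smul_neg])
    (by
      intro r s
      congr 1
      have hm : (⁅(r : U), (s : U)⁆ : U) ∈ ⁅R', R'⁆ :=
        Subgroup.commutator_mem_commutator r.2 s.2
      have e1 := hz _ hm (s * r)
      have e2 : (⁅(r : U), (s : U)⁆ : U) * ((s : U) * (r : U)) = (r : U) * (s : U) := by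
        simp [commutatorElement_def, mul_assoc]
      have e3 := congrArg (fun z : U => K.mkQ (d (z : F))) e2
      simp only [Subgroup.coe_mul] at e3 e1
      rw [hd, map_add, map_add, e1, hd, hd] at e3
      simp only [map_add] at e3
      simp only [β]
      rw [← sub_eq_zero] at e3 ⊢
      rw [← neg_eq_zero, ← e3]
      abel)
    ⟨a, haU⟩ hc'
  simp only at h4
  rw [h0] at h4
  have h5 : K.mkQ (d (a ^ 2)) = 0 := by
    rw [pow_two, hd, map_add, map_add]
    have := hz _ hc' ⟨⟨a, haU⟩, hle hc'⟩
    simp only at this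
    rw [this, add_zero, ← two_smul ℤ]
    exact h4.symm
  rwa [Submodule.mkQ_apply, Submodule.Quotient.mk_eq_zero] at h5

theorem augI_sup (S T : Subgroup F) [S.Normal] [T.Normal] : augI (S ⊔ T) ≤ augI S + augI T := by
  have h : aug (S ⊔ T) ≤ augI S + augI T := by
    unfold aug
    rw [Submodule.span_le]
    rintro _ ⟨n, hn, rfl⟩
    obtain ⟨s, hs, t, ht, rfl⟩ := Subgroup.mem_sup_of_normal_left.1 hn
    have e : of ℤ F (s * t) - 1 = (of ℤ F s - 1) * of ℤ F t + (of ℤ F t - 1) := by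
      rw [map_mul]; noncomm_ring
    rw [e]
    refine Submodule.add_mem_sup ?_ (sub_one_mem_augI T ht)
    rw [← augI_mul_top S]
    exact Submodule.mul_mem_mul (sub_one_mem_augI S hs) Submodule.mem_top
  calc augI (S ⊔ T) = aug (S ⊔ T) * ⊤ := rfl
    _ ≤ (augI S + augI T) * ⊤ := mul_le_mul' h le_rfl
    _ = augI S + augI T := by rw [add_mul, augI_mul_top, augI_mul_top]

end Ring

/-- Theorem 5.4: if `R ⊆ S`, `R ⊆ T` and `a ∈ D(F, 𝐬𝐫𝐬 + 𝐭𝐫𝐭)`,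
then `a² ∈ D(F, 𝐫𝐫𝐬 + 𝐬𝐫𝐫 + 𝐫𝐫𝐭 + 𝐭𝐫𝐫)` and `a⁴ ∈ [R, R, ST]`. -/
theorem stohr_srs_trt (F : Type) [Group F] [IsFreeGroup F]
    (R S T : Subgroup F) [R.Normal] [S.Normal] [T.Normal]
    (hRS : R ≤ S) (hRT : R ≤ T) (a : F)
    (ha : (MonoidAlgebra.of ℤ F a) - 1 ∈ augI S * augI R * augI S + augI T * augI R * augI T) :
    ((MonoidAlgebra.of ℤ F (a ^ 2)) - 1 ∈
      augI R * augI R * augI S + augI S * augI R * augI R +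
        augI R * augI R * augI T + augI T * augI R * augI R) ∧
      a ^ 4 ∈ ⁅⁅R, R⁆, S ⊔ T⁆ := by
  have hle : augI S * augI R * augI S + augI T * augI R * augI T ≤
      augI (S ⊔ T) * augI R * augI (S ⊔ T) := by
    have hS : augI S ≤ augI (S ⊔ T) := augI_mono le_sup_left
    have hT : augI T ≤ augI (S ⊔ T) := augI_mono le_sup_right
    exact sup_le (mul_le_mul' (mul_le_mul' hS le_rfl) hS)
      (mul_le_mul' (mul_le_mul' hT le_rfl) hT)
  have ha' := hle ha
  have hRU : R ≤ S ⊔ T := hRS.trans le_sup_left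
  refine ⟨?_, fourth (S ⊔ T) R hRU a ha'⟩
  refine square (S ⊔ T) R hRU _ ?_ ?_ a ha'
  · refine (mul_le_mul' le_rfl (augI_sup S T)).trans ?_
    rw [mul_add]
    refine sup_le ?_ ?_
    · exact le_sup_left.trans (le_sup_left.trans le_sup_left)
    · exact le_sup_right.trans le_sup_left
  · refine (mul_le_mul' (mul_le_mul' (augI_sup S T) le_rfl) le_rfl).trans ?_
    rw [add_mul, add_mul]
    refine sup_le ?_ ?_
    · exact le_sup_right.trans (le_sup_left.trans le_sup_left)
    · exact le_sup_right
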